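/- arXiv:1310.6815 — 2 statements merged into one kernel-verified Lean document; each statement's English description precedes it below -/
import Mathlib

section
/- Let N ≥ 1, let b₁,…,b_N, d₁,…,d_N be nonnegative reals with B = Σbᵢ and D = Σdᵢ, B + D > 0. Let κ, κ* ∈ ℝ with κ ≥ κ*. Assign weights c₁,…,c_{2N} alternating as c_{2i-1} = bᵢ with curvature κ and c_{2i} = dᵢ with curvature κᵢ satisfying κ ≥ κᵢ ≥ κ*. Then the weighted average κ̄ = [Σᵢ cᵢ²κ⁽ⁱ⁾ + 2Σᵢ (c_{i+1}+⋯+c_{2N})·cᵢ·κ⁽ⁱ⁾] / (c₁+⋯+c_{2N})², where κ⁽ⁱ⁾ is the curvature assigned to cᵢ, satisfies κ̄ ≥ B²(κ − κ*)/(B+D)² + κ*. -/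
open Real Set


/-- The square of a finite sum, expanded into diagonal terms and twice the ordered pairs. -/
lemma sum_sq_add_two_mul_sum_tail {ι : Type*} [Fintype ι] [LinearOrder ι] (f : ι → ℝ) :
    ∑ i, f i ^ 2 + 2 * ∑ i, (∑ j ∈ Finset.univ.filter (fun j => i < j), f j) * f i =
      (∑ i, f i) ^ 2 := by
  have hswap : ∑ i, ∑ j, (if j < i then f i * f j else 0) =
      ∑ i, ∑ j, (if i < j then f j * f i else 0) := Finset.sum_comm
  have htail : ∑ i, (∑ j ∈ Finset.univ.filter (fun j => i < j), f j) * f i =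
      ∑ i, ∑ j, (if i < j then f j * f i else 0) := by
    simp only [Finset.sum_mul, Finset.sum_filter, ite_mul, zero_mul]
  have hdiag : ∑ i, f i ^ 2 = ∑ i, ∑ j, (if i = j then f i * f j else 0) := by
    simp [sq]
  rw [sq (∑ i, f i), Finset.sum_mul_sum, two_mul, htail]
  nth_rewrite 2 [← hswap]
  rw [hdiag, ← Finset.sum_add_distrib, ← Finset.sum_add_distrib]
  refine Finset.sum_congr rfl fun i _ => ?_
  rw [← Finset.sum_add_distrib, ← Finset.sum_add_distrib]
  refine Finset.sum_congr rfl fun j _ => ?_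
  rcases lt_trichotomy i j with h | h | h
  · simp [h, h.ne, h.not_gt, mul_comm]
  · simp [h]
  · simp [h, h.ne', h.not_gt]

/-- A sum over `Fin (2 * N)` grouped into consecutive pairs. -/
lemma Fin.sum_univ_two_mul (N : ℕ) (f : Fin (2 * N) → ℝ) :
    ∑ j, f j = ∑ i : Fin N, (f ⟨2 * i.val, by omega⟩ + f ⟨2 * i.val + 1, by omega⟩) := by
  induction N with
  | zero => simp
  | succ n ih =>
    rw [Fin.sum_univ_castSucc (n := n), ← add_assoc]
    refine (Fin.sum_univ_castSucc (n := 2 * n + 1) f).trans ?_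
    rw [Fin.sum_univ_castSucc (n := 2 * n)]
    refine congrArg₂ _ (congrArg₂ _ ?_ rfl) rfl
    exact ih fun j => f j.castSucc.castSucc

/-- If the curvatures `K` are at least `m`, and at least `M ≥ m` on the indices satisfying `p`,
then the tail-weighted quadratic sum of `K` is bounded below accordingly. -/
lemma le_sum_sq_mul_add_two_mul_sum_tail {ι : Type*} [Fintype ι] [LinearOrder ι]
    (p : ι → Prop) [DecidablePred p] {c K : ι → ℝ} {m M : ℝ} (hc : ∀ i, 0 ≤ c i) (hmM : m ≤ M)
    (hm : ∀ i, m ≤ K i) (hM : ∀ i, p i → M ≤ K i) :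
    (M - m) * (∑ i, if p i then c i else 0) ^ 2 + m * (∑ i, c i) ^ 2 ≤
      ∑ i, c i ^ 2 * K i +
        2 * ∑ i, (∑ j ∈ Finset.univ.filter (fun j => i < j), c j) * c i * K i := by
  rw [← sum_sq_add_two_mul_sum_tail c, ← sum_sq_add_two_mul_sum_tail fun i => if p i then c i else 0]
  simp only [mul_add, Finset.mul_sum (s := Finset.univ), ← Finset.sum_add_distrib]
  refine Finset.sum_le_sum fun i _ => ?_
  have htail : ∑ j ∈ Finset.univ.filter (fun j => i < j), (if p j then c j else 0) ≤
      ∑ j ∈ Finset.univ.filter (fun j => i < j), c j :=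
    Finset.sum_le_sum fun j _ => by split_ifs <;> simp [hc j]
  have hnonneg : 0 ≤ ∑ j ∈ Finset.univ.filter (fun j => i < j), c j :=
    Finset.sum_nonneg fun j _ => hc j
  set t := ∑ j ∈ Finset.univ.filter (fun j => i < j), c j
  set s := ∑ j ∈ Finset.univ.filter (fun j => i < j), (if p j then c j else 0)
  have hw : 0 ≤ c i ^ 2 + 2 * (t * c i) := by
    have := hc i
    positivity
  by_cases hi : p i
  · simp only [hi, if_true]
    have hK := mul_le_mul_of_nonneg_left (hM i hi) hw
    have hs := mul_le_mul_of_nonneg_left (mul_le_mul_of_nonneg_right htail (hc i))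
      (sub_nonneg.2 hmM)
    linarith
  · simp only [hi, if_false]
    have hK := mul_le_mul_of_nonneg_left (hm i) hw
    linarith

/-- Algebraic content of Corollary 1.6: with alternating segment lengths
`c_{2i-1} = bᵢ` (curvature κ) and `c_{2i} = dᵢ` (curvature `κᵢ ∈ [κ*, κ]`), the
quadratic weighted average `κ̄` of the curvatures satisfies
`κ̄ ≥ B²(κ-κ*)/(B+D)² + κ*`, where `B = Σbᵢ`, `D = Σdᵢ`. -/
theorem stmt6 (N : ℕ) (hN : 1 ≤ N) (b d : Fin N → ℝ)
    (hb : ∀ i, 0 ≤ b i) (hd : ∀ i, 0 ≤ d i)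
    (κ κs : ℝ) (hκ : κs ≤ κ) (κd : Fin N → ℝ)
    (hκd : ∀ i, κs ≤ κd i ∧ κd i ≤ κ)
    (B D : ℝ) (hB : B = ∑ i, b i) (hD : D = ∑ i, d i) (hBD : 0 < B + D)
    (c K : Fin (2 * N) → ℝ)
    (hc : ∀ j : Fin (2 * N), c j =
      if j.val % 2 = 0 then b ⟨j.val / 2, by have := j.isLt; omega⟩ else d ⟨j.val / 2, by have := j.isLt; omega⟩)
    (hK : ∀ j : Fin (2 * N), K j =
      if j.val % 2 = 0 then κ else κd ⟨j.val / 2, by have := j.isLt; omega⟩)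
    (κb : ℝ)
    (hκb : κb = (∑ i, (c i) ^ 2 * K i +
        2 * ∑ i, (∑ j ∈ Finset.univ.filter (fun j => i < j), c j) * c i * K i) /
      (∑ i, c i) ^ 2) :
    B ^ 2 * (κ - κs) / (B + D) ^ 2 + κs ≤ κb := by
  have hsum : ∑ j, c j = B + D := by
    rw [Fin.sum_univ_two_mul, hB, hD, ← Finset.sum_add_distrib]
    refine Finset.sum_congr rfl fun i _ => ?_
    have hdiv : (2 * i.val + 1) / 2 = i.val := by omega
    simp [hc, hdiv, Nat.add_mod]
  have heven : (∑ j : Fin (2 * N), if j.val % 2 = 0 then c j else 0) = B := by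
    rw [Fin.sum_univ_two_mul, hB]
    refine Finset.sum_congr rfl fun i _ => ?_
    simp [hc, Nat.add_mod]
  have hc_nonneg : ∀ j, 0 ≤ c j := fun j => by
    rw [hc]
    split_ifs
    exacts [hb _, hd _]
  have hK_lower : ∀ j, κs ≤ K j := fun j => by
    rw [hK]
    split_ifs
    exacts [hκ, (hκd _).1]
  have hmain := le_sum_sq_mul_add_two_mul_sum_tail (fun j : Fin (2 * N) => j.val % 2 = 0)
    hc_nonneg hκ hK_lower fun j hj => by rw [hK, if_pos hj]
  rw [heven, hsum] at hmain
  have hpos : 0 < (B + D) ^ 2 := by positivity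
  rw [hκb, hsum, div_add' _ _ _ hpos.ne', div_le_div_iff_of_pos_right hpos]
  linarith
end

section
/- In the model plane M²_κ with κ arbitrary (and all points within distance π/(10√κ) of each other when κ > 0), consider a geodesic triangle p, q, x and the expansion of both angle relations: if a = |pq|, c = |px|, b = |qx| with |a − c| < b, then cos(∠̃_q(p,x)) + cos(∠̃_x(p,q)) = (1/2)[sin²(∠̃_q(p,x)) + sin²(∠̃_x(p,q))]·f_a(κ)·b + O(b²) as b → 0, where ∠̃ denotes the corresponding angle of the triangle in M²_κ and f_a(κ) = cs_κ(a)/sn_κ(a). -/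
open Real Set Filter

noncomputable def sn (κ t : ℝ) : ℝ :=
  if 0 < κ then Real.sin (Real.sqrt κ * t) / Real.sqrt κ
  else if κ = 0 then t
  else Real.sinh (Real.sqrt (-κ) * t) / Real.sqrt (-κ)

noncomputable def cs (κ t : ℝ) : ℝ :=
  if 0 < κ then Real.cos (Real.sqrt κ * t)
  else if κ = 0 then 1
  else Real.cosh (Real.sqrt (-κ) * t)

noncomputable def md (κ t : ℝ) : ℝ :=
  if 0 < κ then (1 - Real.cos (Real.sqrt κ * t)) / κ
  else if κ = 0 then t ^ 2 / 2
  else (1 - Real.cosh (Real.sqrt (-κ) * t)) / κ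

/-- `f c κ = cs_κ(c) / sn_κ(c)`. -/
noncomputable def fmod (c κ : ℝ) : ℝ := cs κ c / sn κ c

/-- The model angle of a triangle in `M²_κ` at the vertex between sides of lengths
`x`, `y`, opposite the side of length `z`, via the κ-cosine law in `md` form. -/
noncomputable def mAngle (κ x y z : ℝ) : ℝ :=
  Real.arccos ((md κ x + md κ y - κ * md κ x * md κ y - md κ z) / (sn κ x * sn κ y))

open Asymptotics Topology

section ModelFunctions

lemma sn_sq {r : ℝ} (hr : 0 < r) (t : ℝ) : sn (r ^ 2) t = Real.sin (r * t) / r := by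
  simp [sn, pow_pos hr 2, Real.sqrt_sq hr.le]

lemma cs_sq {r : ℝ} (hr : 0 < r) (t : ℝ) : cs (r ^ 2) t = Real.cos (r * t) := by
  simp [cs, pow_pos hr 2, Real.sqrt_sq hr.le]

lemma md_sq {r : ℝ} (hr : 0 < r) (t : ℝ) :
    md (r ^ 2) t = (1 - Real.cos (r * t)) / r ^ 2 := by
  simp [md, pow_pos hr 2, Real.sqrt_sq hr.le]

lemma sn_neg_sq {r : ℝ} (hr : 0 < r) (t : ℝ) : sn (-r ^ 2) t = Real.sinh (r * t) / r := by
  simp [sn, Real.sqrt_sq hr.le, hr.ne', (pow_pos hr 2).le]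

lemma cs_neg_sq {r : ℝ} (hr : 0 < r) (t : ℝ) : cs (-r ^ 2) t = Real.cosh (r * t) := by
  simp [cs, Real.sqrt_sq hr.le, hr.ne', (pow_pos hr 2).le]

lemma md_neg_sq {r : ℝ} (hr : 0 < r) (t : ℝ) :
    md (-r ^ 2) t = (1 - Real.cosh (r * t)) / (-r ^ 2) := by
  simp [md, Real.sqrt_sq hr.le, hr.ne', (pow_pos hr 2).le]

lemma sn_zero_left (t : ℝ) : sn 0 t = t := by simp [sn]

lemma cs_zero_left (t : ℝ) : cs 0 t = 1 := by simp [cs]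

lemma md_zero_left (t : ℝ) : md 0 t = t ^ 2 / 2 := by simp [md]

/-- Every real number is a positive square, zero, or the negative of a positive square. -/
lemma eq_sq_or_eq_zero_or_eq_neg_sq (κ : ℝ) :
    (∃ r : ℝ, 0 < r ∧ κ = r ^ 2) ∨ κ = 0 ∨ ∃ r : ℝ, 0 < r ∧ κ = -r ^ 2 := by
  rcases lt_trichotomy κ 0 with h | h | h
  · refine Or.inr (Or.inr ⟨√(-κ), Real.sqrt_pos.2 (by linarith), ?_⟩)
    rw [Real.sq_sqrt (by linarith)]; ring
  · exact Or.inr (Or.inl h)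
  · exact Or.inl ⟨√κ, Real.sqrt_pos.2 h, (Real.sq_sqrt h.le).symm⟩

lemma hasDerivAt_sn (κ t : ℝ) : HasDerivAt (sn κ) (cs κ t) t := by
  rcases eq_sq_or_eq_zero_or_eq_neg_sq κ with ⟨r, hr, rfl⟩ | rfl | ⟨r, hr, rfl⟩
  · rw [funext (sn_sq hr), cs_sq hr]
    refine HasDerivAt.congr_deriv ((((hasDerivAt_id t).const_mul r).sin).div_const r) ?_
    simp; field_simp
  · rw [funext sn_zero_left, cs_zero_left]
    exact hasDerivAt_id t
  · rw [funext (sn_neg_sq hr), cs_neg_sq hr]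
    refine HasDerivAt.congr_deriv ((((hasDerivAt_id t).const_mul r).sinh).div_const r) ?_
    simp; field_simp

lemma hasDerivAt_md (κ t : ℝ) : HasDerivAt (md κ) (sn κ t) t := by
  rcases eq_sq_or_eq_zero_or_eq_neg_sq κ with ⟨r, hr, rfl⟩ | rfl | ⟨r, hr, rfl⟩
  · rw [funext (md_sq hr), sn_sq hr]
    refine HasDerivAt.congr_deriv (((((hasDerivAt_id t).const_mul r).cos).const_sub 1).div_const (r ^ 2)) ?_
    simp; field_simp
  · rw [funext md_zero_left, sn_zero_left]
    refine HasDerivAt.congr_deriv (((hasDerivAt_id t).pow 2).div_const 2) ?_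
    simp
  · rw [funext (md_neg_sq hr), sn_neg_sq hr]
    refine HasDerivAt.congr_deriv (((((hasDerivAt_id t).const_mul r).cosh).const_sub 1).div_const (-r ^ 2)) ?_
    simp; field_simp

lemma cs_eq_one_sub_md (κ t : ℝ) : cs κ t = 1 - κ * md κ t := by
  rcases eq_sq_or_eq_zero_or_eq_neg_sq κ with ⟨r, hr, rfl⟩ | rfl | ⟨r, hr, rfl⟩
  · rw [cs_sq hr, md_sq hr]; field_simp; ring
  · rw [cs_zero_left]; ring
  · rw [cs_neg_sq hr, md_neg_sq hr]; field_simp; ring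

lemma hasDerivAt_cs (κ t : ℝ) : HasDerivAt (cs κ) (-(κ * sn κ t)) t := by
  rw [funext (cs_eq_one_sub_md κ)]
  exact ((hasDerivAt_md κ t).const_mul κ).const_sub 1

lemma sn_zero (κ : ℝ) : sn κ 0 = 0 := by simp [sn]

lemma md_zero (κ : ℝ) : md κ 0 = 0 := by simp [md]

lemma cs_zero (κ : ℝ) : cs κ 0 = 1 := by simp [cs_eq_one_sub_md, md_zero]

lemma sn_neg (κ t : ℝ) : sn κ (-t) = -sn κ t := by
  unfold sn; split_ifs <;> simp [neg_div]

lemma md_neg (κ t : ℝ) : md κ (-t) = md κ t := by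
  unfold md; split_ifs <;> simp

lemma md_abs (κ t : ℝ) : md κ |t| = md κ t := by
  rcases abs_choice t with h | h <;> rw [h]
  exact md_neg κ t

lemma md_add (κ x y : ℝ) :
    md κ (x + y) = md κ x + md κ y - κ * md κ x * md κ y + sn κ x * sn κ y := by
  rcases eq_sq_or_eq_zero_or_eq_neg_sq κ with ⟨r, hr, rfl⟩ | rfl | ⟨r, hr, rfl⟩
  · simp only [md_sq hr, sn_sq hr, mul_add, Real.cos_add]; field_simp; ring
  · simp only [md_zero_left, sn_zero_left]; ring
  · simp only [md_neg_sq hr, sn_neg_sq hr, mul_add, Real.cosh_add]; field_simp; ring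

lemma md_sub (κ x y : ℝ) :
    md κ (x - y) = md κ x + md κ y - κ * md κ x * md κ y - sn κ x * sn κ y := by
  rw [sub_eq_add_neg, md_add, md_neg, sn_neg]; ring

lemma sn_pos {κ t : ℝ} (ht : 0 < t) (h : 0 < κ → √κ * t < Real.pi) : 0 < sn κ t := by
  rcases eq_sq_or_eq_zero_or_eq_neg_sq κ with ⟨r, hr, rfl⟩ | rfl | ⟨r, hr, rfl⟩
  · rw [sn_sq hr]
    have h' := h (by positivity)
    rw [Real.sqrt_sq hr.le] at h'
    exact div_pos (Real.sin_pos_of_pos_of_lt_pi (by positivity) h') hr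
  · rwa [sn_zero_left]
  · rw [sn_neg_sq hr]
    exact div_pos (Real.sinh_pos_iff.2 (by positivity)) hr

lemma monotoneOn_md {κ R : ℝ} (h : ∀ t, 0 < t → t < R → 0 < sn κ t) :
    MonotoneOn (md κ) (Set.Icc 0 R) := by
  refine monotoneOn_of_deriv_nonneg (convex_Icc 0 R)
    (fun t _ => (hasDerivAt_md κ t).continuousAt.continuousWithinAt)
    (fun t _ => (hasDerivAt_md κ t).differentiableAt.differentiableWithinAt) fun t ht => ?_
  rw [interior_Icc] at ht
  rw [(hasDerivAt_md κ t).deriv]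
  exact (h t ht.1 ht.2).le

end ModelFunctions

/-- The cosine of the model angle prescribed by the cosine law. -/
noncomputable def cosLaw (κ x y z : ℝ) : ℝ :=
  (md κ x + md κ y - κ * md κ x * md κ y - md κ z) / (sn κ x * sn κ y)

lemma cosLaw_mem_Icc {κ R x y z : ℝ} (h : ∀ t, 0 < t → t < R → 0 < sn κ t)
    (hx : 0 < x) (hy : 0 < y) (hR : x + y < R) (hxy : |x - y| ≤ z) (hz : z ≤ x + y) :
    -1 ≤ cosLaw κ x y z ∧ cosLaw κ x y z ≤ 1 := by
  have hpos : 0 < sn κ x * sn κ y :=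
    mul_pos (h x hx (by linarith)) (h y hy (by linarith))
  have h0 := abs_nonneg (x - y)
  have h1 := monotoneOn_md h ⟨h0, by linarith⟩ ⟨by linarith, by linarith⟩ hxy
  have h2 := monotoneOn_md h ⟨by linarith, by linarith⟩ ⟨by linarith, by linarith⟩ hz
  rw [md_abs, md_sub] at h1
  rw [md_add] at h2
  unfold cosLaw
  rw [le_div_iff₀ hpos, div_le_iff₀ hpos]
  constructor <;> linarith

lemma cos_mAngle {κ x y z : ℝ} (h : -1 ≤ cosLaw κ x y z ∧ cosLaw κ x y z ≤ 1) :
    Real.cos (mAngle κ x y z) = cosLaw κ x y z :=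
  Real.cos_arccos h.1 h.2

/-- A function vanishing at `a` whose derivative is `O((x - a) ^ n)` is `O((x - a) ^ (n + 1))`. -/
lemma isBigO_pow_succ_of_hasDerivAt {g g' : ℝ → ℝ} {a : ℝ} {n : ℕ}
    (hg : ∀ x, HasDerivAt g (g' x) x) (h0 : g a = 0)
    (h : g' =O[𝓝 a] fun x => (x - a) ^ n) :
    g =O[𝓝 a] fun x => (x - a) ^ (n + 1) := by
  obtain ⟨C, hC, hb⟩ := h.exists_pos
  obtain ⟨ε, hε, hb⟩ := Metric.eventually_nhds_iff_ball.1 hb.bound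
  refine IsBigO.of_bound C (Metric.eventually_nhds_iff_ball.2 ⟨ε, hε, fun x hx => ?_⟩)
  have hx' : |x - a| < ε := by simpa [Real.dist_eq] using hx
  have key := (convex_closedBall a |x - a|).norm_image_sub_le_of_norm_hasDerivWithin_le
    (f := g) (f' := g') (C := C * |x - a| ^ n) (x := a) (y := x)
    (fun t _ => (hg t).hasDerivWithinAt) (fun t ht => ?_)
    (by simp) (by simp [Real.dist_eq])
  · rw [h0, sub_zero] at key
    simpa [pow_succ, mul_assoc] using key
  · have ht' : |t - a| ≤ |x - a| := by simpa [Real.dist_eq] using ht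
    refine (hb t (by simpa [Real.dist_eq] using ht'.trans_lt hx')).trans ?_
    rw [norm_pow, Real.norm_eq_abs]
    gcongr

lemma isBigO_sub_linear {f f' : ℝ → ℝ} {f'' a : ℝ}
    (hf : ∀ x, HasDerivAt f (f' x) x) (hf' : HasDerivAt f' f'' a) :
    (fun x => f x - f a - f' a * (x - a)) =O[𝓝 a] fun x => (x - a) ^ 2 := by
  refine isBigO_pow_succ_of_hasDerivAt (g' := fun x => f' x - f' a) (n := 1)
    (fun x => ?_) (by simp) (by simpa using hf'.isBigO_sub)
  refine HasDerivAt.congr_deriv (((hf x).sub_const (f a)).sub (((hasDerivAt_id x).sub_const a).const_mul (f' a))) ?_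
  simp

lemma isBigO_sn_sub_self (κ : ℝ) : (fun t => sn κ t - t) =O[𝓝 0] fun t => t ^ 2 := by
  simpa [sn_zero, cs_zero] using isBigO_sub_linear (hasDerivAt_sn κ) (hasDerivAt_cs κ 0)

lemma isBigO_md_sub_half_sq (κ : ℝ) :
    (fun t => md κ t - t ^ 2 / 2) =O[𝓝 0] fun t => t ^ 3 := by
  have := isBigO_pow_succ_of_hasDerivAt (g := fun t => md κ t - t ^ 2 / 2)
    (g' := fun t => sn κ t - t) (a := 0) (n := 2) (fun t => ?_) (by simp [md_zero])
    (by simpa using isBigO_sn_sub_self κ)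
  · simpa using this
  · refine HasDerivAt.congr_deriv ((hasDerivAt_md κ t).sub (((hasDerivAt_id t).pow 2).div_const 2)) ?_
    simp

/-- The filter of pairs `(b, c)` tending to `(0, a)` subject to `0 < b` and `|a - c| < b`. -/
def thinTriangles (a : ℝ) : Filter (ℝ × ℝ) :=
  𝓝 (0, a) ⊓ 𝓟 {p | 0 < p.1 ∧ |a - p.2| < p.1}

section Asymptotics

variable {a : ℝ}

lemma eventually_thinTriangles (a : ℝ) :
    ∀ᶠ p in thinTriangles a, 0 < p.1 ∧ |a - p.2| < p.1 :=
  mem_inf_of_right (mem_principal_self _)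

lemma tendsto_fst_thinTriangles (a : ℝ) : Tendsto Prod.fst (thinTriangles a) (𝓝 0) :=
  (continuous_fst.tendsto (0, a)).mono_left inf_le_left

lemma tendsto_snd_thinTriangles (a : ℝ) : Tendsto Prod.snd (thinTriangles a) (𝓝 a) :=
  (continuous_snd.tendsto (0, a)).mono_left inf_le_left

lemma isBigO_snd_sub (a : ℝ) : (fun p => p.2 - a) =O[thinTriangles a] Prod.fst := by
  refine IsBigO.of_bound 1 ((eventually_thinTriangles a).mono fun p hp => ?_)
  rw [Real.norm_eq_abs, Real.norm_eq_abs, abs_of_pos hp.1, abs_sub_comm]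
  linarith [hp.2]

lemma isBigO_ratio (a : ℝ) :
    (fun p => (a - p.2) / p.1) =O[thinTriangles a] fun _ => (1 : ℝ) := by
  refine IsBigO.of_bound 1 ((eventually_thinTriangles a).mono fun p hp => ?_)
  rw [Real.norm_eq_abs, abs_div, abs_of_pos hp.1, norm_one, mul_one, div_le_one hp.1]
  exact hp.2.le

lemma isBigO_sn_fst_sub (κ a : ℝ) :
    (fun p => sn κ p.1 - p.1) =O[thinTriangles a] fun p => p.1 ^ 2 :=
  (isBigO_sn_sub_self κ).comp_tendsto (tendsto_fst_thinTriangles a)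

lemma isBigO_md_fst_sub (κ a : ℝ) :
    (fun p => md κ p.1 - p.1 ^ 2 / 2) =O[thinTriangles a] fun p => p.1 ^ 3 :=
  (isBigO_md_sub_half_sq κ).comp_tendsto (tendsto_fst_thinTriangles a)

lemma isBigO_fst_pow (a : ℝ) {m n : ℕ} (h : m ≤ n) :
    (fun p => p.1 ^ n) =O[thinTriangles a] fun p => p.1 ^ m :=
  IsBigO.of_bound 1 <| by
    filter_upwards [eventually_thinTriangles a,
      (tendsto_fst_thinTriangles a).eventually (gt_mem_nhds one_pos)] with p hp hp1
    rw [Real.norm_of_nonneg (by have := hp.1; positivity),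
      Real.norm_of_nonneg (by have := hp.1; positivity), one_mul]
    exact pow_le_pow_of_le_one hp.1.le hp1.le h

lemma isBigO_md_fst (κ a : ℝ) : (fun p => md κ p.1) =O[thinTriangles a] fun p => p.1 ^ 2 := by
  have h := ((isBigO_md_fst_sub κ a).trans (isBigO_fst_pow a (by norm_num : 2 ≤ 3))).add
    ((isBigO_refl (fun p : ℝ × ℝ => p.1 ^ 2) (thinTriangles a)).const_mul_left (1 / 2))
  exact h.congr_left fun p => by ring

lemma isBigO_comp_snd_sub {f : ℝ → ℝ} {f' a : ℝ} (hf : HasDerivAt f f' a) :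
    (fun p => f p.2 - f a) =O[thinTriangles a] Prod.fst :=
  (hf.isBigO_sub.comp_tendsto (tendsto_snd_thinTriangles a)).trans (isBigO_snd_sub a)

lemma isBigO_comp_snd_sub_linear {f f' : ℝ → ℝ} {f'' a : ℝ}
    (hf : ∀ x, HasDerivAt f (f' x) x) (hf' : HasDerivAt f' f'' a) :
    (fun p => f p.2 - f a - f' a * (p.2 - a)) =O[thinTriangles a] fun p => p.1 ^ 2 :=
  ((isBigO_sub_linear hf hf').comp_tendsto (tendsto_snd_thinTriangles a)).trans
    ((isBigO_snd_sub a).pow 2)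

lemma isEquivalent_sn_fst (κ a : ℝ) : (fun p => sn κ p.1) ~[thinTriangles a] Prod.fst := by
  refine (isBigO_sn_fst_sub κ a).trans_isLittleO ?_
  exact (isLittleO_pow_id one_lt_two).comp_tendsto (tendsto_fst_thinTriangles a)

lemma isBigO_inv_sn_fst (κ a : ℝ) :
    (fun p => (sn κ p.1)⁻¹) =O[thinTriangles a] fun p => p.1⁻¹ :=
  (isEquivalent_sn_fst κ a).inv.isBigO

lemma eventually_fst_ne_zero (a : ℝ) : ∀ᶠ p in thinTriangles a, p.1 ≠ 0 :=
  (eventually_thinTriangles a).mono fun _ hp => hp.1.ne'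

lemma eventually_sn_fst_ne_zero (κ a : ℝ) : ∀ᶠ p in thinTriangles a, sn κ p.1 ≠ 0 := by
  filter_upwards [(isEquivalent_sn_fst κ a).isBigO_symm.eq_zero_imp,
    eventually_fst_ne_zero a] with p h hp h0
  exact hp (h h0)

lemma tendsto_sn_snd (κ a : ℝ) :
    Tendsto (fun p => sn κ p.2) (thinTriangles a) (𝓝 (sn κ a)) :=
  (hasDerivAt_sn κ a).continuousAt.tendsto.comp (tendsto_snd_thinTriangles a)

/-- Dividing an `O(b ^ (n + 1))` quantity by `sn κ b` yields an `O(b ^ n)` quantity. -/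
lemma isBigO_mul_inv_sn_fst {κ a : ℝ} {F : ℝ × ℝ → ℝ} {n : ℕ}
    (hF : F =O[thinTriangles a] fun p => p.1 ^ (n + 1)) :
    (fun p => F p * (sn κ p.1)⁻¹) =O[thinTriangles a] fun p => p.1 ^ n := by
  refine (hF.mul (isBigO_inv_sn_fst κ a)).congr' EventuallyEq.rfl ?_
  filter_upwards [eventually_fst_ne_zero a] with p hp
  field_simp
  ring

lemma isBigO_cosLaw_sub_ratio {κ : ℝ} (hS : sn κ a ≠ 0) :
    (fun p => cosLaw κ a p.1 p.2 - (a - p.2) / p.1) =O[thinTriangles a] Prod.fst := by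
  have h1 := isBigO_comp_snd_sub_linear (hasDerivAt_md κ) (hasDerivAt_sn κ a)
  have h2 := (isBigO_md_fst κ a).const_mul_left (cs κ a)
  have h3 := ((isBigO_ratio a).mul (isBigO_sn_fst_sub κ a)).const_mul_left (sn κ a)
  simp only [one_mul] at h3
  have h := (isBigO_mul_inv_sn_fst (κ := κ) (n := 1) ((h2.sub h1).sub h3)).const_mul_left
    (sn κ a)⁻¹
  simp only [pow_one] at h
  refine h.congr' ?_ EventuallyEq.rfl
  filter_upwards [eventually_fst_ne_zero a, eventually_sn_fst_ne_zero κ a] with p hp hs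
  simp only [cosLaw, cs_eq_one_sub_md]
  field_simp
  ring

lemma isBigO_cosLaw_add_ratio {κ : ℝ} (hS : sn κ a ≠ 0) :
    (fun p => cosLaw κ p.2 p.1 a + (a - p.2) / p.1) =O[thinTriangles a] Prod.fst := by
  have hT := tendsto_sn_snd κ a
  have h1 := isBigO_comp_snd_sub_linear (hasDerivAt_md κ) (hasDerivAt_sn κ a)
  have h2 := (isBigO_md_fst κ a).mul (((hasDerivAt_cs κ a).continuousAt.tendsto.comp
    (tendsto_snd_thinTriangles a)).isBigO_one ℝ)
  have h3 := ((isBigO_ratio a).mul (isBigO_sn_fst_sub κ a)).const_mul_left (sn κ a)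
  have h4 := (isBigO_ratio a).mul ((isBigO_comp_snd_sub (hasDerivAt_sn κ a)).mul
    (isEquivalent_sn_fst κ a).isBigO)
  simp only [one_mul, mul_one, ← sq] at h2 h3 h4
  have h := (isBigO_mul_inv_sn_fst (κ := κ) (n := 1) (((h2.add h1).add h3).add h4)).mul
    ((hT.inv₀ hS).isBigO_one ℝ)
  simp only [pow_one, mul_one] at h
  refine h.congr' ?_ EventuallyEq.rfl
  filter_upwards [eventually_fst_ne_zero a, eventually_sn_fst_ne_zero κ a,
    hT.eventually_ne hS] with p hp hs hc
  simp only [cosLaw, cs_eq_one_sub_md, Function.comp_apply]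
  field_simp
  ring

lemma isBigO_md_div_sn_sub_half (κ a : ℝ) :
    (fun p => md κ p.1 / sn κ p.1 - p.1 / 2) =O[thinTriangles a] fun p => p.1 ^ 2 := by
  have h1 := ((isBigO_refl (Prod.fst : ℝ × ℝ → ℝ) (thinTriangles a)).mul
    (isBigO_sn_fst_sub κ a)).const_mul_left (1 / 2)
  have h := isBigO_mul_inv_sn_fst (κ := κ) (n := 2)
    ((isBigO_md_fst_sub κ a).sub (h1.congr_right fun p => by ring))
  refine h.congr' ?_ EventuallyEq.rfl
  filter_upwards [eventually_sn_fst_ne_zero κ a] with p hs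
  field_simp
  ring

/-- The sum of the two cosines adjacent to the short side, to second order. -/
lemma isBigO_cosLaw_add_cosLaw {κ : ℝ} (hS : sn κ a ≠ 0) :
    (fun p => cosLaw κ a p.1 p.2 + cosLaw κ p.2 p.1 a -
      (1 / 2) * ((1 - cosLaw κ a p.1 p.2 ^ 2) + (1 - cosLaw κ p.2 p.1 a ^ 2)) *
        fmod a κ * p.1) =O[thinTriangles a] fun p => p.1 ^ 2 := by
  have hb1 : Prod.fst =O[thinTriangles a] fun _ => (1 : ℝ) :=
    (tendsto_fst_thinTriangles a).isBigO_one ℝ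
  have hX := isBigO_cosLaw_sub_ratio hS
  have hY := isBigO_cosLaw_add_ratio hS
  have hu := isBigO_ratio a
  have hY1 : (fun p => cosLaw κ p.2 p.1 a) =O[thinTriangles a] fun _ => (1 : ℝ) :=
    ((hY.trans hb1).sub hu).congr_left fun p => by ring
  have h1 := (isBigO_comp_snd_sub_linear (hasDerivAt_sn κ) (hasDerivAt_cs κ a)).mul hY1
  have hcs := ((hasDerivAt_cs κ a).continuousAt.tendsto.comp
    (tendsto_snd_thinTriangles a)).isBigO_one ℝ
  have h2 := (isBigO_md_div_sn_sub_half κ a).mul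
    ((isBigO_const_const (cs κ a) one_ne_zero _).add hcs)
  have h3 := ((isBigO_refl Prod.fst _).mul
    (isBigO_comp_snd_sub (hasDerivAt_cs κ a))).const_mul_left (1 / 2)
  have hX2 := (hX.mul (hX.trans hb1)).const_mul_left (1 / 2)
  have hY2 := (hY.mul (hY.trans hb1)).const_mul_left (1 / 2)
  have huX := hu.mul hX
  simp only [one_mul, mul_one] at h1 h2 hX2 hY2 huX
  have h4 := ((isBigO_refl Prod.fst _).mul ((huX.add hX2).add hY2)).const_mul_left (cs κ a)
  simp only [← sq] at h3 h4
  refine ((((h2.sub h1).add h3).add h4).const_mul_left (sn κ a)⁻¹).congr' ?_ EventuallyEq.rfl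
  filter_upwards [eventually_fst_ne_zero a, eventually_sn_fst_ne_zero κ a,
    (tendsto_sn_snd κ a).eventually_ne hS] with p hp hs hc
  have key : sn κ a * cosLaw κ a p.1 p.2 + sn κ p.2 * cosLaw κ p.2 p.1 a =
      md κ p.1 / sn κ p.1 * (cs κ a + cs κ p.2) := by
    simp only [cosLaw, cs_eq_one_sub_md]
    field_simp
    ring
  have hd : a - p.2 = (a - p.2) / p.1 * p.1 := by field_simp
  simp only [fmod, Function.comp_apply]
  rw [inv_mul_eq_iff_eq_mul₀ hS]
  have hk : sn κ a * (cs κ a / sn κ a) = cs κ a := by field_simp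
  generalize cosLaw κ a p.1 p.2 = X at *
  generalize cosLaw κ p.2 p.1 a = Y at *
  generalize (a - p.2) / p.1 = u at *
  generalize cs κ a / sn κ a = f at *
  linear_combination (-1 : ℝ) * key - cs κ a * Y * hd +
    (1 / 2) * ((1 - X ^ 2) + (1 - Y ^ 2)) * p.1 * hk

end Asymptotics

/-- Identity (1.13): for a model triangle `p q x` in `M²_κ` with `a = |pq|`,
`c = |px|`, `b = |qx|` and `|a - c| < b`, as `b → 0`:
`cos ∠̃_q(p,x) + cos ∠̃_x(p,q)
  = ½[sin²∠̃_q(p,x) + sin²∠̃_x(p,q)]·f_a(κ)·b + O(b²)`. -/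
theorem stmt18 (κ a : ℝ) (ha : 0 < a)
    (haκ : 0 < κ → a < Real.pi / (10 * Real.sqrt κ)) :
    ∃ C > (0:ℝ), ∃ δ > (0:ℝ), ∀ b c : ℝ, 0 < b → b < δ → 0 < c → |a - c| < b →
      |Real.cos (mAngle κ a b c) + Real.cos (mAngle κ c b a) -
        (1 / 2) * ((Real.sin (mAngle κ a b c)) ^ 2 +
          (Real.sin (mAngle κ c b a)) ^ 2) * fmod a κ * b| ≤ C * b ^ 2 := by
  have hsn : ∀ t, 0 < t → t < 10 * a → 0 < sn κ t := fun t ht hta => by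
    refine sn_pos ht fun hκ => ?_
    have hr := Real.sqrt_pos.2 hκ
    have h := haκ hκ
    rw [lt_div_iff₀ (by positivity)] at h
    nlinarith
  obtain ⟨C, hC, hO⟩ := (isBigO_cosLaw_add_cosLaw (hsn a ha (by linarith)).ne').exists_pos
  have hO := hO.bound
  rw [thinTriangles, eventually_inf_principal, Metric.eventually_nhds_iff] at hO
  obtain ⟨ε, hε, hO⟩ := hO
  refine ⟨C, hC, min ε a, lt_min hε ha, fun b c hb hbδ hc hac => ?_⟩
  obtain ⟨hbε, hba⟩ := lt_min_iff.1 hbδ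
  obtain ⟨hac1, hac2⟩ := abs_lt.1 hac
  have hX : -1 ≤ cosLaw κ a b c ∧ cosLaw κ a b c ≤ 1 :=
    cosLaw_mem_Icc hsn ha hb (by linarith) (abs_le.2 ⟨by linarith, by linarith⟩) (by linarith)
  have hY : -1 ≤ cosLaw κ c b a ∧ cosLaw κ c b a ≤ 1 :=
    cosLaw_mem_Icc hsn hc hb (by linarith) (abs_le.2 ⟨by linarith, by linarith⟩) (by linarith)
  have hdist : dist (b, c) ((0 : ℝ), a) < ε := by
    rw [Prod.dist_eq, Real.dist_eq, Real.dist_eq, sub_zero, abs_of_pos hb, abs_sub_comm]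
    exact max_lt hbε (hac.trans hbε)
  have h := hO hdist ⟨hb, hac⟩
  rw [Real.norm_eq_abs, Real.norm_of_nonneg (sq_nonneg b)] at h
  rwa [Real.sin_sq, Real.sin_sq, cos_mAngle hX, cos_mAngle hY]
end
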